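/- arXiv:math/0606734 — 7 statements merged into one kernel-verified Lean document; each statement's English description precedes it below -/
import Mathlib

section
/- Let n ≥ 2, let 0 < θ ≤ 2φ and 0 < φ ≤ π/2. Then A(n,θ,φ) ≤ m(n, 2·sin(θ/2)/sin φ). -/
noncomputable section

/-- The "North pole" `(0, …, 0, 1)` of the unit sphere in `ℝ^n`. -/
def north (n : ℕ) : EuclideanSpace ℝ (Fin n) :=
  if h : 0 < n then EuclideanSpace.single ⟨n - 1, Nat.sub_lt h Nat.one_pos⟩ 1 else 0

/-- Angular distance between two points: `arccos ⟨x, y⟩`. -/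
def aDist {n : ℕ} (x y : EuclideanSpace ℝ (Fin n)) : ℝ := Real.arccos (inner ℝ x y : ℝ)

/-- A finite set of unit vectors with pairwise angular distance at least `θ`. -/
def IsCode {n : ℕ} (θ : ℝ) (C : Finset (EuclideanSpace ℝ (Fin n))) : Prop :=
  (∀ x ∈ C, ‖x‖ = 1) ∧ ∀ x ∈ C, ∀ y ∈ C, x ≠ y → θ ≤ aDist x y

/-- `A(n, θ)`: maximal size of a `θ`-code on the unit sphere `S^{n-1} ⊂ ℝ^n`. -/
def sphereMax (n : ℕ) (θ : ℝ) : ℕ :=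
  sSup {M | ∃ C : Finset (EuclideanSpace ℝ (Fin n)), IsCode θ C ∧ C.card = M}

/-- `A(n, θ, φ)`: maximal size of a `θ`-code in the cap of angular radius `φ` about the
North pole. -/
def capMax (n : ℕ) (θ φ : ℝ) : ℕ :=
  sSup {M | ∃ C : Finset (EuclideanSpace ℝ (Fin n)), IsCode θ C ∧
    (∀ x ∈ C, aDist x (north n) ≤ φ) ∧ C.card = M}

/-- `A(n, θ, [ψ, φ])`: maximal size of a `θ`-code in the strip `Z(n, [ψ, φ])`. -/
def stripMax (n : ℕ) (θ ψ φ : ℝ) : ℕ :=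
  sSup {M | ∃ C : Finset (EuclideanSpace ℝ (Fin n)), IsCode θ C ∧
    (∀ x ∈ C, ψ ≤ aDist x (north n) ∧ aDist x (north n) ≤ φ) ∧ C.card = M}

/-- `m(n, d)`: maximal number of points in the closed unit ball of `ℝ^n` with pairwise
Euclidean distances at least `d`. -/
def ballMax (n : ℕ) (d : ℝ) : ℕ :=
  sSup {M | ∃ C : Finset (EuclideanSpace ℝ (Fin n)), (∀ x ∈ C, ‖x‖ ≤ 1) ∧
    (∀ x ∈ C, ∀ y ∈ C, x ≠ y → d ≤ dist x y) ∧ C.card = M}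

/-- `ω(θ, α, β) = arccos((cos θ - cos α cos β) / (sin α sin β))`. -/
def omega2 (θ α β : ℝ) : ℝ :=
  Real.arccos ((Real.cos θ - Real.cos α * Real.cos β) / (Real.sin α * Real.sin β))

/-- `ω(θ, α) := ω(θ, α, α)`. -/
def omega1 (θ α : ℝ) : ℝ := omega2 θ α α

end


theorem le_of_sq_le_sq_aux {a b : ℝ} (h : a ^ 2 ≤ b ^ 2) (hb : 0 ≤ b) : a ≤ b :=
  (abs_le_of_sq_le_sq h hb |> (le_abs_self a).trans)

theorem ball_bdd (n : ℕ) (d : ℝ) (hd : 0 < d) :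
    BddAbove {M | ∃ C : Finset (EuclideanSpace ℝ (Fin n)), (∀ x ∈ C, ‖x‖ ≤ 1) ∧
      (∀ x ∈ C, ∀ y ∈ C, x ≠ y → d ≤ dist x y) ∧ C.card = M} := by
  obtain ⟨t, -, htf, ht⟩ :=
    (isCompact_closedBall (0 : EuclideanSpace ℝ (Fin n)) 1).finite_cover_balls
      (e := d / 2) (by linarith)
  refine ⟨htf.toFinset.card, ?_⟩
  rintro M ⟨C, hC1, hC2, rfl⟩
  have h : ∀ x ∈ C, ∃ c ∈ t, dist x c < d / 2 := by
    intro x hx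
    have := ht (show x ∈ Metric.closedBall 0 1 by simpa using hC1 x hx)
    simpa using this
  choose! f hf1 hf2 using h
  refine Finset.card_le_card_of_injOn f (fun x hx => by simpa using hf1 x hx) ?_
  intro x hx y hy hxy
  by_contra hne
  have h1 := hC2 x hx y hy hne
  have h2 := hf2 x hx
  have h3 := hf2 y hy
  rw [← hxy] at h3
  have := dist_triangle_right x y (f x)
  linarith

theorem north_norm (n : ℕ) (hn : 2 ≤ n) : ‖north n‖ = 1 := by
  unfold north
  rw [dif_pos (by omega)]
  simp

theorem stmt0 (n : ℕ) (hn : 2 ≤ n) (θ φ : ℝ) (hθ : 0 < θ) (hθφ : θ ≤ 2 * φ)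
    (hφ : 0 < φ) (hφ2 : φ ≤ Real.pi / 2) :
    capMax n θ φ ≤ ballMax n (2 * Real.sin (θ / 2) / Real.sin φ) := by
  have hpi := Real.pi_pos
  have hs : 0 < Real.sin φ := Real.sin_pos_of_pos_of_lt_pi hφ (by linarith)
  have hs2 : 0 < Real.sin (θ / 2) := Real.sin_pos_of_pos_of_lt_pi (by linarith) (by linarith)
  have hc : 0 ≤ Real.cos φ := Real.cos_nonneg_of_mem_Icc ⟨by linarith, hφ2⟩
  have hsc := Real.sin_sq_add_cos_sq φ
  have hN := north_norm n hn
  unfold capMax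
  refine csSup_le ⟨0, ∅, by simp [IsCode]⟩ ?_
  rintro M ⟨C, ⟨hC1, hC2⟩, hC3, rfl⟩
  have key : ∀ x y : EuclideanSpace ℝ (Fin n), ‖x‖ = 1 → ‖y‖ = 1 →
      Real.cos (aDist x y) = inner ℝ x y := by
    intro x y hx hy
    have h := abs_real_inner_le_norm x y
    rw [hx, hy, mul_one, abs_le] at h
    exact Real.cos_arccos h.1 h.2
  set f : EuclideanSpace ℝ (Fin n) → EuclideanSpace ℝ (Fin n) :=
    fun x => (Real.sin φ)⁻¹ • (x - Real.cos φ • north n) with hf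
  have finj : Function.Injective f := by
    intro x y hxy
    have := smul_right_injective _ (inv_ne_zero hs.ne') hxy
    simpa using this
  have fdist : ∀ x y, dist (f x) (f y) = dist x y / Real.sin φ := by
    intro x y
    simp only [hf, dist_smul₀, dist_sub_right, Real.norm_eq_abs, abs_of_pos (inv_pos.2 hs)]
    rw [div_eq_inv_mul]
  unfold ballMax
  refine le_csSup (ball_bdd n _ (by positivity)) ⟨C.map ⟨f, finj⟩, ?_, ?_, by simp⟩
  · intro z hz
    obtain ⟨x, hx, rfl⟩ := Finset.mem_map.1 hz
    have h1 : Real.cos φ ≤ inner ℝ x (north n) := by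
      rw [← key x _ (hC1 x hx) hN]
      exact Real.cos_le_cos_of_nonneg_of_le_pi (Real.arccos_nonneg _) (by linarith) (hC3 x hx)
    have h2 : ‖x - Real.cos φ • north n‖ ≤ Real.sin φ := by
      refine le_of_sq_le_sq_aux ?_ hs.le
      rw [norm_sub_sq_real, inner_smul_right, norm_smul, hC1 x hx, hN, Real.norm_eq_abs,
        abs_of_nonneg hc]
      nlinarith
    simp only [hf, Function.Embedding.coeFn_mk, norm_smul, norm_inv, Real.norm_eq_abs,
      abs_of_pos hs]
    rw [← div_eq_inv_mul, div_le_one hs]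
    exact h2
  · intro z hz w hw hzw
    obtain ⟨x, hx, rfl⟩ := Finset.mem_map.1 hz
    obtain ⟨y, hy, rfl⟩ := Finset.mem_map.1 hw
    have hxy : x ≠ y := fun h => hzw (by rw [h])
    simp only [Function.Embedding.coeFn_mk, fdist]
    refine div_le_div_of_nonneg_right ?_ hs.le
    have h1 : inner ℝ x y ≤ Real.cos θ := by
      rw [← key x y (hC1 x hx) (hC1 y hy)]
      exact Real.cos_le_cos_of_nonneg_of_le_pi hθ.le (Real.arccos_le_pi _) (hC2 x hx y hy hxy)
    refine le_of_sq_le_sq_aux ?_ dist_nonneg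
    have h3 : Real.cos θ = 1 - 2 * Real.sin (θ / 2) ^ 2 := by
      have := Real.cos_two_mul (θ / 2)
      rw [mul_div_cancel₀ _ two_ne_zero] at this
      have := Real.sin_sq_add_cos_sq (θ / 2)
      linarith
    rw [dist_eq_norm, norm_sub_sq_real, hC1 x hx, hC1 y hy]
    nlinarith
end

section
/- Let n ≥ 2, let 0 < θ ≤ 2φ and 0 < φ ≤ π/2. Then A(n,θ,φ) ≤ A(n+1, ω(θ,φ)), where ω(θ,φ) = 2·arcsin(sin(θ/2)/sin φ); here A(n+1,·) refers to codes on the unit sphere S^n ⊂ ℝ^{n+1}. -/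
lemma inner_le_cos_aux {n : ℕ} {ω : ℝ} (h0 : 0 ≤ ω) {x y : EuclideanSpace ℝ (Fin n)}
    (hx : ‖x‖ = 1) (hy : ‖y‖ = 1) (h : ω ≤ aDist x y) : inner ℝ x y ≤ Real.cos ω := by
  have hb := abs_le.1 (abs_real_inner_le_norm x y)
  rw [hx, hy] at hb
  have := Real.cos_le_cos_of_nonneg_of_le_pi h0 (Real.arccos_le_pi _) h
  rwa [Real.cos_arccos (by linarith [hb.1]) (by linarith [hb.2])] at this

lemma bddAbove_aux (n : ℕ) (ω : ℝ) (h0 : 0 < ω) (h1 : ω ≤ Real.pi) :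
    BddAbove {M | ∃ C : Finset (EuclideanSpace ℝ (Fin n)), IsCode ω C ∧ C.card = M} := by
  have hc : Real.cos ω < 1 := by
    have := Real.cos_lt_cos_of_nonneg_of_le_pi le_rfl h1 h0
    simpa using this
  set d := Real.sqrt (2 - 2 * Real.cos ω) with hd
  have hdpos : 0 < d := Real.sqrt_pos.2 (by linarith)
  obtain ⟨t, htf, ht⟩ := Metric.totallyBounded_iff.1
    (isCompact_sphere (0 : EuclideanSpace ℝ (Fin n)) 1).totallyBounded (d / 2) (by linarith)
  refine ⟨htf.toFinset.card, ?_⟩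
  rintro M ⟨C, hC, rfl⟩
  have key : ∀ x ∈ C, ∃ z ∈ t, dist x z < d / 2 := by
    intro x hx
    have := ht (show x ∈ Metric.sphere (0 : EuclideanSpace ℝ (Fin n)) 1 by simp [hC.1 x hx])
    simpa using this
  choose! f hf using key
  refine Finset.card_le_card_of_injOn f (fun x hx => by simpa using (hf x hx).1) ?_
  intro x hx y hy hxy
  by_contra hne
  have h2 := inner_le_cos_aux h0.le (hC.1 x hx) (hC.1 y hy) (hC.2 x hx y hy hne)
  have h3 : d ≤ dist x y := by
    rw [hd, dist_eq_norm]
    refine Real.sqrt_le_iff.2 ⟨norm_nonneg _, ?_⟩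
    rw [norm_sub_sq_real, hC.1 x hx, hC.1 y hy]
    linarith
  have h4 := (hf x hx).2
  have h5 := (hf y hy).2
  rw [← hxy, dist_comm] at h5
  linarith [dist_triangle x (f x) y]

/-- Lift of a point of the unit ball to the unit sphere one dimension up. -/
noncomputable def liftPt {n : ℕ} (a : EuclideanSpace ℝ (Fin n)) : EuclideanSpace ℝ (Fin (n + 1)) :=
  WithLp.toLp 2 (Fin.cons (Real.sqrt (1 - ‖a‖ ^ 2)) (fun i => a i))

lemma inner_liftPt {n : ℕ} (a b : EuclideanSpace ℝ (Fin n)) :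
    inner ℝ (liftPt a) (liftPt b) =
      Real.sqrt (1 - ‖a‖ ^ 2) * Real.sqrt (1 - ‖b‖ ^ 2) + inner ℝ a b := by
  simp [liftPt, PiLp.inner_apply, Fin.sum_univ_succ, mul_comm]

lemma norm_liftPt {n : ℕ} (a : EuclideanSpace ℝ (Fin n)) (h : ‖a‖ ^ 2 ≤ 1) : ‖liftPt a‖ = 1 := by
  have h1 := inner_liftPt a a
  rw [Real.mul_self_sqrt (by linarith), real_inner_self_eq_norm_sq, real_inner_self_eq_norm_sq] at h1
  have : ‖liftPt a‖ ^ 2 = 1 := by linarith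
  nlinarith [norm_nonneg (liftPt a)]

lemma liftPt_inj {n : ℕ} {a b : EuclideanSpace ℝ (Fin n)} (h : liftPt a = liftPt b) : a = b := by
  ext i
  have := congrArg (fun v : EuclideanSpace ℝ (Fin (n + 1)) => v i.succ) h
  simpa [liftPt] using this

lemma inner_liftPt_le {n : ℕ} (a b : EuclideanSpace ℝ (Fin n)) (ha : ‖a‖ ^ 2 ≤ 1)
    (hb : ‖b‖ ^ 2 ≤ 1) : inner ℝ (liftPt a) (liftPt b) ≤ 1 - ‖a - b‖ ^ 2 / 2 := by
  rw [inner_liftPt, norm_sub_sq_real]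
  have h1 := Real.sq_sqrt (show 0 ≤ 1 - ‖a‖ ^ 2 by linarith)
  have h2 := Real.sq_sqrt (show 0 ≤ 1 - ‖b‖ ^ 2 by linarith)
  nlinarith [sq_nonneg (Real.sqrt (1 - ‖a‖ ^ 2) - Real.sqrt (1 - ‖b‖ ^ 2))]

lemma norm_north {n : ℕ} (hn : 0 < n) : ‖north n‖ = 1 := by
  simp [north, hn]

theorem stmt2 (n : ℕ) (hn : 2 ≤ n) (θ φ : ℝ) (hθ : 0 < θ) (hθφ : θ ≤ 2 * φ)
    (hφ : 0 < φ) (hφ2 : φ ≤ Real.pi / 2) :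
    capMax n θ φ ≤ sphereMax (n + 1) (2 * Real.arcsin (Real.sin (θ / 2) / Real.sin φ)) := by
  classical
  have hpi := Real.pi_pos
  have hs : 0 < Real.sin φ := Real.sin_pos_of_pos_of_lt_pi hφ (by linarith)
  have hs2 : 0 < Real.sin (θ / 2) := Real.sin_pos_of_pos_of_lt_pi (by linarith) (by linarith)
  have hle : Real.sin (θ / 2) ≤ Real.sin φ :=
    Real.sin_le_sin_of_le_of_le_pi_div_two (by linarith) hφ2 (by linarith)
  set r := Real.sin (θ / 2) / Real.sin φ with hr
  have hr0 : 0 < r := div_pos hs2 hs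
  have hr1 : r ≤ 1 := (div_le_one hs).2 hle
  have hw0 : 0 < 2 * Real.arcsin r := by linarith [Real.arcsin_pos.2 hr0]
  have hw1 : 2 * Real.arcsin r ≤ Real.pi := by linarith [Real.arcsin_le_pi_div_two r]
  have hcosw : Real.cos (2 * Real.arcsin r) = 1 - 2 * r ^ 2 := by
    rw [Real.cos_two_mul, Real.cos_sq', Real.sin_arcsin (by linarith) hr1]; ring
  have hcosθ : Real.cos θ = 1 - 2 * Real.sin (θ / 2) ^ 2 := by
    have := Real.cos_two_mul (θ / 2)
    rw [Real.cos_sq'] at this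
    rw [show θ = 2 * (θ / 2) by ring, this, show 2 * (θ / 2) / 2 = θ / 2 by ring]; ring
  have hrs : r * Real.sin φ = Real.sin (θ / 2) := div_mul_cancel₀ _ hs.ne'
  unfold capMax
  refine csSup_le ⟨0, ∅, ⟨by simp, by simp⟩, by simp, by simp⟩ ?_
  rintro M ⟨C, hC, hcap, rfl⟩
  let g : EuclideanSpace ℝ (Fin n) → EuclideanSpace ℝ (Fin n) :=
    fun x => (Real.sin φ)⁻¹ • (x - Real.cos φ • north n)
  have hg : ∀ x ∈ C, ‖g x‖ ^ 2 ≤ 1 := by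
    intro x hx
    have hnn := norm_north (n := n) (by omega)
    have hb := abs_le.1 (abs_real_inner_le_norm x (north n))
    rw [hC.1 x hx, hnn] at hb
    have h1 := Real.cos_le_cos_of_nonneg_of_le_pi (Real.arccos_nonneg _) (by linarith) (hcap x hx)
    rw [Real.cos_arccos (by linarith [hb.1]) (by linarith [hb.2])] at h1
    have hc0 : 0 ≤ Real.cos φ := Real.cos_nonneg_of_neg_pi_div_two_le_of_le (by linarith) hφ2
    have h2 : ‖x - Real.cos φ • north n‖ ^ 2 ≤ Real.sin φ ^ 2 := by
      rw [norm_sub_sq_real, inner_smul_right, norm_smul, hC.1 x hx, hnn, Real.norm_eq_abs,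
        mul_one, sq_abs, Real.sin_sq]
      nlinarith
    simp only [g]
    rw [norm_smul, mul_pow, Real.norm_eq_abs, sq_abs, inv_pow, inv_mul_le_iff₀ (by positivity)]
    linarith
  have hgd : ∀ x y, ‖g x - g y‖ ^ 2 * Real.sin φ ^ 2 = ‖x - y‖ ^ 2 := by
    intro x y
    simp only [g]
    rw [← smul_sub, sub_sub_sub_cancel_right, norm_smul, mul_pow, Real.norm_eq_abs, sq_abs]
    field_simp
  have hginj : ∀ x y, g x = g y → x = y := by
    intro x y h
    have := hgd x y
    rw [h, sub_self, norm_zero] at this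
    have h0 : ‖x - y‖ ^ 2 = 0 := by rw [← this]; ring
    exact sub_eq_zero.1 (norm_eq_zero.1 (pow_eq_zero_iff (two_ne_zero) |>.1 h0))
  refine le_csSup (bddAbove_aux (n + 1) _ hw0 hw1) ⟨C.image (fun x => liftPt (g x)), ⟨?_, ?_⟩, ?_⟩
  · intro z hz
    obtain ⟨x, hx, rfl⟩ := Finset.mem_image.1 hz
    exact norm_liftPt _ (hg x hx)
  · intro z hz w hw hne
    obtain ⟨x, hx, rfl⟩ := Finset.mem_image.1 hz
    obtain ⟨y, hy, rfl⟩ := Finset.mem_image.1 hw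
    have hxy : x ≠ y := fun h => hne (by rw [h])
    have h1 := inner_le_cos_aux hθ.le (hC.1 x hx) (hC.1 y hy) (hC.2 x hx y hy hxy)
    have h2 := inner_liftPt_le _ _ (hg x hx) (hg y hy)
    have h3 := hgd x y
    rw [norm_sub_sq_real x y, hC.1 x hx, hC.1 y hy] at h3
    have h4 : 4 * r ^ 2 ≤ ‖g x - g y‖ ^ 2 := by
      refine le_of_mul_le_mul_right ?_ (pow_pos hs 2)
      rw [h3, mul_assoc, ← mul_pow, hrs]
      linarith
    unfold aDist
    rw [← Real.arccos_cos hw0.le hw1]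
    apply Real.arccos_le_arccos
    rw [hcosw]
    linarith
  · exact Finset.card_image_of_injective _ fun x y h => hginj x y (liftPt_inj h)
end

section
/- Let n ≥ 3, let 0 < φ ≤ π/2 and 2φ ≥ θ > φ. Then A(n,θ,φ) = A(n−1, ω(θ,φ)), where A(n−1,·) refers to codes on the unit sphere S^{n−2} ⊂ ℝ^{n−1}. -/
open Real in
lemma key_ineq {α φ c b : ℝ} (h0 : 0 ≤ α) (hα : α ≤ φ) (hφ : φ ≤ π / 2) (hb : 0 ≤ b)
    (hc : c ≤ b) : (c - cos α * b) * sin φ ≤ (c - cos φ * b) * sin α := by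
  have hs : sin (φ - α) = sin φ * cos α - cos φ * sin α := sin_sub φ α
  have hd : 0 ≤ sin (φ - α) := sin_nonneg_of_nonneg_of_le_pi (by linarith) (by linarith [pi_pos])
  have ha : 0 ≤ sin α := sin_nonneg_of_nonneg_of_le_pi h0 (by linarith [pi_pos])
  have hca : cos α ≤ 1 := cos_le_one α
  have e : sin φ = sin α * cos (φ - α) + cos α * sin (φ - α) := by
    rw [← sin_add]; congr 1; ring
  have h1 : sin φ - sin α ≤ sin (φ - α) := by
    have := cos_le_one (φ - α)
    nlinarith
  have h2 : sin α ≤ sin φ :=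
    sin_le_sin_of_le_of_le_pi_div_two (by linarith [pi_pos]) hφ hα
  have h3 : c * (sin φ - sin α) ≤ b * (sin φ - sin α) :=
    mul_le_mul_of_nonneg_right hc (by linarith)
  have h4 : b * (sin φ - sin α) ≤ b * sin (φ - α) := mul_le_mul_of_nonneg_left h1 hb
  rw [hs] at h4
  linarith

/-- projection dropping the last coordinate -/
noncomputable def dropLast {m : ℕ} (x : EuclideanSpace ℝ (Fin (m + 1))) :
    EuclideanSpace ℝ (Fin m) := WithLp.toLp 2 (fun i => x i.castSucc)

/-- append a last coordinate -/
noncomputable def addLast {m : ℕ} (y : EuclideanSpace ℝ (Fin m)) (s c : ℝ) :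
    EuclideanSpace ℝ (Fin (m + 1)) := WithLp.toLp 2 (Fin.snoc (fun i => s * y i) c)

lemma inner_split {m : ℕ} (x y : EuclideanSpace ℝ (Fin (m + 1))) :
    inner ℝ x y = inner ℝ (dropLast x) (dropLast y) + x (Fin.last m) * y (Fin.last m) := by
  simp [PiLp.inner_apply, Fin.sum_univ_castSucc, dropLast, mul_comm]

lemma inner_addLast {m : ℕ} (x y : EuclideanSpace ℝ (Fin m)) (s c : ℝ) :
    inner ℝ (addLast x s c) (addLast y s c) = s ^ 2 * inner ℝ x y + c ^ 2 := by
  simp only [PiLp.inner_apply, Fin.sum_univ_castSucc, addLast, Finset.mul_sum]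
  simp only [Fin.snoc_castSucc, Fin.snoc_last, RCLike.inner_apply, conj_trivial]
  congr 1
  · apply Finset.sum_congr rfl; intros; ring
  · ring

lemma north_succ (m : ℕ) : north (m + 1) = EuclideanSpace.single (Fin.last m) 1 := by
  simp [north, Fin.last]

lemma inner_north {m : ℕ} (x : EuclideanSpace ℝ (Fin (m + 1))) :
    inner ℝ x (north (m + 1)) = x (Fin.last m) := by
  rw [north_succ, EuclideanSpace.inner_single_right]; simp

lemma norm_one_iff {m : ℕ} (x : EuclideanSpace ℝ (Fin m)) : ‖x‖ = 1 ↔ inner ℝ x x = (1 : ℝ) := by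
  rw [real_inner_self_eq_norm_sq]
  constructor
  · intro h; rw [h]; norm_num
  · intro h; have := norm_nonneg x; nlinarith

open Real in
lemma cap_to_sphere {m : ℕ} {θ φ : ℝ} (hφ : 0 < φ) (hφ2 : φ ≤ π / 2)
    (h1 : φ < θ) (h2 : θ ≤ 2 * φ) (C : Finset (EuclideanSpace ℝ (Fin (m + 1))))
    (hC : IsCode θ C) (hcap : ∀ x ∈ C, aDist x (north (m + 1)) ≤ φ) (hcard : 1 < C.card) :
    ∃ D : Finset (EuclideanSpace ℝ (Fin m)), IsCode (omega1 θ φ) D ∧ D.card = C.card := by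
  classical
  have hsφ : 0 < sin φ := sin_pos_of_pos_of_lt_pi hφ (by linarith [pi_pos])
  have hcφ : 0 ≤ cos φ := cos_nonneg_of_mem_Icc ⟨by linarith, hφ2⟩
  have hct : cos θ < cos φ := cos_lt_cos_of_nonneg_of_le_pi hφ.le (by linarith) h1
  have bnd : ∀ x ∈ C, ∀ y ∈ C, |inner ℝ x y| ≤ 1 := by
    intro x hx y hy
    have := abs_real_inner_le_norm x y
    rwa [hC.1 x hx, hC.1 y hy, one_mul] at this
  have hin : ∀ x ∈ C, ∀ y ∈ C, x ≠ y → inner ℝ x y ≤ cos θ := by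
    intro x hx y hy hxy
    have h := hC.2 x hx y hy hxy
    have hb := abs_le.1 (bnd x hx y hy)
    have h' := cos_le_cos_of_nonneg_of_le_pi (by linarith) (arccos_le_pi _) h
    rwa [cos_arccos hb.1 hb.2] at h'
  have hsq : ∀ x ∈ C, ‖dropLast x‖ ^ 2 = 1 - x (Fin.last m) ^ 2 := by
    intro x hx
    have h := inner_split x x
    rw [(norm_one_iff x).1 (hC.1 x hx), real_inner_self_eq_norm_sq] at h
    linarith
  have hang : ∀ x ∈ C, ∃ α, 0 ≤ α ∧ α ≤ φ ∧ cos α = x (Fin.last m) ∧ sin α = ‖dropLast x‖ := by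
    intro x hx
    have h := hcap x hx
    rw [aDist, inner_north] at h
    have h3 := hsq x hx
    have h4 : x (Fin.last m) ^ 2 ≤ 1 := by nlinarith [sq_nonneg ‖dropLast x‖]
    have h5 := abs_le.1 ((sq_le_one_iff_abs_le_one _).1 h4)
    refine ⟨_, arccos_nonneg _, h, cos_arccos h5.1 h5.2, ?_⟩
    rw [sin_arccos, ← h3, sqrt_sq (norm_nonneg _)]
  have hlast : ∀ x ∈ C, cos φ ≤ x (Fin.last m) := by
    intro x hx
    obtain ⟨α, ha, hb, hc, -⟩ := hang x hx
    rw [← hc]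
    exact cos_le_cos_of_nonneg_of_le_pi ha (by linarith [pi_pos]) hb
  have hpos : ∀ x ∈ C, 0 < ‖dropLast x‖ := by
    intro x hx
    rcases (norm_nonneg (dropLast x)).lt_or_eq with h | h
    · exact h
    exfalso
    obtain ⟨y, hy, hyx⟩ := Finset.exists_mem_ne hcard x
    have h3 := hsq x hx
    rw [← h] at h3
    have h4 := hlast x hx
    have h5 : x (Fin.last m) = 1 := by nlinarith
    have h6 := hin x hx y hy hyx.symm
    rw [inner_split, norm_eq_zero.1 h.symm, inner_zero_left, h5] at h6
    have := hlast y hy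
    linarith
  set q := (cos θ - cos φ * cos φ) / (sin φ * sin φ) with hq
  have hq1 : q < 1 := by
    rw [hq, div_lt_one (by positivity)]
    nlinarith [sin_sq_add_cos_sq φ, cos_le_one φ]
  let f : EuclideanSpace ℝ (Fin (m + 1)) → EuclideanSpace ℝ (Fin m) :=
    fun x => ‖dropLast x‖⁻¹ • dropLast x
  have hf1 : ∀ x ∈ C, ‖f x‖ = 1 := by
    intro x hx
    have := hpos x hx
    simp only [f, norm_smul, norm_inv, norm_norm]
    field_simp
  have hfi : ∀ x ∈ C, ∀ y ∈ C, x ≠ y → inner ℝ (f x) (f y) ≤ q := by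
    intro x hx y hy hxy
    obtain ⟨α, a1, a2, a3, a4⟩ := hang x hx
    obtain ⟨β, b1, b2, b3, b4⟩ := hang y hy
    have pa := hpos x hx
    have pb := hpos y hy
    have h := hin x hx y hy hxy
    rw [inner_split, ← a3, ← b3] at h
    have hly := hlast y hy
    simp only [f, real_inner_smul_left, real_inner_smul_right]
    rw [← a4, ← b4]
    rw [← a4] at pa
    rw [← b4] at pb
    rw [← b3] at hly
    have k1 := key_ineq (c := cos θ) (b := cos β) a1 a2 hφ2 (by linarith) (by linarith)
    have k2 := key_ineq (c := cos θ) (b := cos φ) b1 b2 hφ2 hcφ hct.le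
    calc (sin β)⁻¹ * ((sin α)⁻¹ * inner ℝ (dropLast x) (dropLast y))
        = inner ℝ (dropLast x) (dropLast y) / (sin α * sin β) := by field_simp
      _ ≤ (cos θ - cos α * cos β) / (sin α * sin β) := by gcongr; linarith
      _ ≤ (cos θ - cos φ * cos β) / (sin φ * sin β) := by
          rw [div_le_div_iff₀ (by positivity) (by positivity)]
          nlinarith [mul_le_mul_of_nonneg_right k1 pb.le]
      _ ≤ q := by
          rw [hq, div_le_div_iff₀ (by positivity) (by positivity)]
          nlinarith [mul_le_mul_of_nonneg_right k2 hsφ.le]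
  have hinj : ∀ x ∈ C, ∀ y ∈ C, f x = f y → x = y := by
    intro x hx y hy hxy
    by_contra hne
    have h := hfi x hx y hy hne
    rw [hxy, (norm_one_iff _).1 (hf1 y hy)] at h
    linarith
  refine ⟨C.image f, ⟨?_, ?_⟩, Finset.card_image_of_injOn (fun x hx y hy h => hinj x hx y hy h)⟩
  · intro z hz
    obtain ⟨x, hx, rfl⟩ := Finset.mem_image.1 hz
    exact hf1 x hx
  · intro z hz w hw hzw
    obtain ⟨x, hx, rfl⟩ := Finset.mem_image.1 hz
    obtain ⟨y, hy, rfl⟩ := Finset.mem_image.1 hw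
    exact arccos_le_arccos (hfi x hx y hy (fun h => hzw (by rw [h])))

open Real in
lemma sphere_to_cap {m : ℕ} {θ φ : ℝ} (hφ : 0 < φ) (hφ2 : φ ≤ π / 2)
    (h1 : φ < θ) (h2 : θ ≤ 2 * φ) (D : Finset (EuclideanSpace ℝ (Fin m)))
    (hD : IsCode (omega1 θ φ) D) :
    ∃ C : Finset (EuclideanSpace ℝ (Fin (m + 1))), IsCode θ C ∧
      (∀ x ∈ C, aDist x (north (m + 1)) ≤ φ) ∧ C.card = D.card := by
  classical
  have hsφ : 0 < sin φ := sin_pos_of_pos_of_lt_pi hφ (by linarith [pi_pos])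
  have hsc := sin_sq_add_cos_sq φ
  let f : EuclideanSpace ℝ (Fin m) → EuclideanSpace ℝ (Fin (m + 1)) :=
    fun y => addLast y (sin φ) (cos φ)
  have hinj : Function.Injective f := by
    intro x y h
    ext i
    have h' := congrArg (fun z : EuclideanSpace ℝ (Fin (m + 1)) => z i.castSucc) h
    simp only [f, addLast, Fin.snoc_castSucc] at h'
    exact mul_left_cancel₀ hsφ.ne' h'
  set q := (cos θ - cos φ * cos φ) / (sin φ * sin φ) with hq
  have hqm : q * (sin φ * sin φ) = cos θ - cos φ * cos φ := div_mul_cancel₀ _ (by positivity)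
  have hq1 : q ≤ 1 := by
    rw [hq, div_le_one (by positivity)]
    nlinarith [cos_le_one θ]
  have hq0 : -1 ≤ q := by
    rw [hq, le_div_iff₀ (by positivity)]
    have := cos_le_cos_of_nonneg_of_le_pi (by linarith) (by linarith) h2
    rw [cos_two_mul] at this
    nlinarith
  refine ⟨D.image f, ⟨?_, ?_⟩, ?_, Finset.card_image_of_injective _ hinj⟩
  · intro z hz
    obtain ⟨x, hx, rfl⟩ := Finset.mem_image.1 hz
    rw [norm_one_iff, inner_addLast, (norm_one_iff x).1 (hD.1 x hx)]
    linarith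
  · intro z hz w hw hzw
    obtain ⟨x, hx, rfl⟩ := Finset.mem_image.1 hz
    obtain ⟨y, hy, rfl⟩ := Finset.mem_image.1 hw
    have h := hD.2 x hx y hy (fun h => hzw (by rw [h]))
    have hb := abs_real_inner_le_norm x y
    rw [hD.1 x hx, hD.1 y hy, one_mul] at hb
    have hb := abs_le.1 hb
    have h' := cos_le_cos_of_nonneg_of_le_pi (arccos_nonneg _) (arccos_le_pi _) h
    rw [cos_arccos hb.1 hb.2, cos_arccos hq0 hq1] at h'
    have h3 : inner ℝ (f x) (f y) ≤ cos θ := by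
      rw [inner_addLast]
      nlinarith [mul_le_mul_of_nonneg_right h' (mul_pos hsφ hsφ).le]
    have h4 := arccos_le_arccos h3
    rwa [arccos_cos (by linarith) (by linarith)] at h4
  · intro z hz
    obtain ⟨x, hx, rfl⟩ := Finset.mem_image.1 hz
    rw [aDist, inner_north]
    have : f x (Fin.last m) = cos φ := by simp only [f, addLast, Fin.snoc_last]
    rw [this, arccos_cos hφ.le (by linarith [pi_pos])]

theorem stmt4 (n : ℕ) (hn : 3 ≤ n) (θ φ : ℝ) (hφ : 0 < φ) (hφ2 : φ ≤ Real.pi / 2)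
    (h1 : φ < θ) (h2 : θ ≤ 2 * φ) :
    capMax n θ φ = sphereMax (n - 1) (omega1 θ φ) := by
  obtain ⟨m, rfl⟩ : ∃ m, n = m + 1 := ⟨n - 1, by omega⟩
  rw [Nat.add_sub_cancel, capMax, sphereMax]
  congr 1
  ext M
  constructor
  · rintro ⟨C, hC, hcap, rfl⟩
    by_cases hc : 1 < C.card
    · exact cap_to_sphere hφ hφ2 h1 h2 C hC hcap hc
    · rcases Nat.eq_zero_or_pos C.card with h0 | h0
      · exact ⟨∅, ⟨by simp, by simp⟩, by simp [h0]⟩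
      · refine ⟨{EuclideanSpace.single ⟨0, by omega⟩ 1}, ⟨by simp, ?_⟩, ?_⟩
        · intro x hx y hy hxy
          rw [Finset.mem_singleton] at hx hy
          exact absurd (hx.trans hy.symm) hxy
        · rw [Finset.card_singleton]; omega
  · rintro ⟨D, hD, rfl⟩
    exact sphere_to_cap hφ hφ2 h1 h2 D hD
end

section
/- Let 0 < φ ≤ π/2 and φ < θ ≤ 2φ. Then for the sphere S² ⊂ ℝ³, A(3,θ,φ) = ⌊2π/ω(θ,φ)⌋. -/
lemma aux_interp (φ c A B α : ℝ) (hφ : 0 < φ) (hφ2 : φ ≤ Real.pi / 2) (h0 : 0 ≤ α) (h1 : α ≤ φ)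
    (hA : 0 ≤ A) (hAc : c < A) (hv : c < A * Real.cos φ + B * Real.sin φ) :
    c < A * Real.cos α + B * Real.sin α := by
  have hpi := Real.pi_pos
  have hs : 0 < Real.sin φ := Real.sin_pos_of_pos_of_lt_pi hφ (by linarith)
  have hsa : 0 ≤ Real.sin α := Real.sin_nonneg_of_nonneg_of_le_pi h0 (by linarith)
  have hsb : 0 ≤ Real.sin (φ - α) := Real.sin_nonneg_of_nonneg_of_le_pi (by linarith) (by linarith)
  have hle : Real.sin α ≤ Real.sin φ :=
    Real.sin_le_sin_of_le_of_le_pi_div_two (by linarith) hφ2 h1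
  have hsub : Real.sin φ ≤ Real.sin (φ - α) + Real.sin α := by
    have h : Real.sin φ = Real.sin (φ - α) * Real.cos α + Real.cos (φ - α) * Real.sin α := by
      rw [← Real.sin_add]; congr 1; ring
    nlinarith [Real.cos_le_one α, Real.cos_le_one (φ - α)]
  set V := A * Real.cos φ + B * Real.sin φ with hV
  have key : Real.sin φ * (A * Real.cos α + B * Real.sin α) =
      Real.sin (φ - α) * A + Real.sin α * V := by
    rw [Real.sin_sub, hV]; ring
  by_contra hcon
  push Not at hcon
  have h3 : Real.sin (φ - α) * A + Real.sin α * V ≤ Real.sin φ * c := by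
    rw [← key]; exact mul_le_mul_of_nonneg_left hcon hs.le
  rcases lt_or_ge V 0 with hV0 | hV0
  · nlinarith [mul_nonneg hsb hA, mul_le_mul_of_nonpos_right hle hV0.le, mul_lt_mul_of_pos_left hv hs]
  · rcases lt_or_ge c 0 with hc | hc
    · nlinarith [mul_nonneg hsb hA, mul_nonneg hsa hV0, mul_neg_of_pos_of_neg hs hc]
    · rcases hsa.lt_or_eq with h | h
      · nlinarith [mul_le_mul_of_nonneg_left hAc.le hsb, mul_lt_mul_of_pos_left hv h,
          mul_le_mul_of_nonneg_right hsub hc]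
      · rw [← h] at h3 hsub
        nlinarith [mul_lt_mul_of_pos_left hAc hs, mul_le_mul_of_nonneg_right hsub hA]

lemma aux_key (θ φ α β g : ℝ) (hφ : 0 < φ) (hφ2 : φ ≤ Real.pi / 2)
    (hc : Real.cos θ < Real.cos φ) (hα : 0 ≤ α) (hα1 : α ≤ φ) (hβ : 0 ≤ β) (hβ1 : β ≤ φ)
    (h : Real.cos α * Real.cos β + Real.sin α * Real.sin β * g ≤ Real.cos θ) :
    Real.cos φ * Real.cos φ + Real.sin φ * Real.sin φ * g ≤ Real.cos θ := by
  by_contra hcon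
  push Not at hcon
  have hpi := Real.pi_pos
  have hcf : 0 ≤ Real.cos φ := Real.cos_nonneg_of_neg_pi_div_two_le_of_le (by linarith) hφ2
  have hcb : Real.cos φ ≤ Real.cos β := Real.cos_le_cos_of_nonneg_of_le_pi hβ (by linarith) hβ1
  have s1 := aux_interp φ (Real.cos θ) (Real.cos φ) (Real.sin φ * g) β hφ hφ2 hβ hβ1 hcf hc
    (by linarith)
  have s2 := aux_interp φ (Real.cos θ) (Real.cos β) (Real.sin β * g) α hφ hφ2 hα hα1
    (hcf.trans hcb) (by linarith) (by linarith)
  linarith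

lemma aux_cos_le (w d : ℝ) (h0 : 0 ≤ w) (h1 : w ≤ d) (h2 : d ≤ 2 * Real.pi - w) :
    Real.cos d ≤ Real.cos w := by
  rcases le_total d Real.pi with h | h
  · exact Real.cos_le_cos_of_nonneg_of_le_pi h0 h h1
  · rw [← Real.cos_two_pi_sub d]
    exact Real.cos_le_cos_of_nonneg_of_le_pi h0 (by linarith) (by linarith)

lemma aux_le_of_cos (w d : ℝ) (hw : w ≤ Real.pi) (h0 : 0 ≤ d)
    (h : Real.cos d ≤ Real.cos w) : w ≤ d := by
  by_contra hcon
  push Not at hcon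
  exact absurd (Real.cos_lt_cos_of_nonneg_of_le_pi h0 hw hcon) (not_lt.mpr h)

lemma aux_pack (w : ℝ) (hw0 : 0 < w) (hw : w ≤ Real.pi) (S : Finset ℝ)
    (hS : ∀ a ∈ S, -Real.pi < a ∧ a ≤ Real.pi)
    (hd : ∀ a ∈ S, ∀ b ∈ S, a ≠ b → Real.cos (a - b) ≤ Real.cos w) :
    S.card * w ≤ 2 * Real.pi := by
  rcases Nat.lt_or_ge S.card 2 with hlt | hge
  · have : (S.card : ℝ) ≤ 1 := by exact_mod_cast Nat.lt_succ_iff.mp hlt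
    nlinarith [Real.pi_pos]
  · obtain ⟨m, hm⟩ : ∃ m, S.card = m + 2 := ⟨S.card - 2, by omega⟩
    let f := S.orderEmbOfFin hm
    have hf : ∀ i, f i ∈ S := fun i => S.orderEmbOfFin_mem hm i
    have hsep : ∀ i j, i < j → w ≤ f j - f i := by
      intro i j hij
      have hlt : f i < f j := f.strictMono hij
      exact aux_le_of_cos w _ hw (by linarith) (hd _ (hf j) _ (hf i) hlt.ne')
    have hind : ∀ k : ℕ, ∀ hk : k < m + 2, f 0 + k * w ≤ f ⟨k, hk⟩ := by
      intro k
      induction k with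
      | zero => intro hk; simp
      | succ k ih =>
        intro hk
        have h1 := ih (by omega)
        have h2 := hsep ⟨k, by omega⟩ ⟨k + 1, hk⟩ (by simp [Fin.lt_def])
        push_cast
        linarith
    have hl := hind (m + 1) (by omega)
    set l : Fin (m + 2) := ⟨m + 1, by omega⟩ with hldef
    have hlt : f 0 < f l := f.strictMono (by simp [hldef, Fin.lt_def])
    have hcos := hd _ (hf l) _ (hf 0) hlt.ne'
    rw [← Real.cos_two_pi_sub] at hcos
    have hb := aux_le_of_cos w _ hw (by linarith [(hS _ (hf l)).2, (hS _ (hf 0)).1]) hcos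
    rw [hm]
    push_cast at hl ⊢
    linarith

lemma aux_adist_north (x : EuclideanSpace ℝ (Fin 3)) : aDist x (north 3) = Real.arccos (x 2) := by
  unfold aDist north
  congr 1
  simp [PiLp.inner_apply, Fin.sum_univ_three]

lemma aux_inner (x y : EuclideanSpace ℝ (Fin 3)) :
    inner ℝ x y = x 0 * y 0 + x 1 * y 1 + x 2 * y 2 := by
  simp [PiLp.inner_apply, Fin.sum_univ_three]; ring

lemma aux_norm (x : EuclideanSpace ℝ (Fin 3)) (hx : ‖x‖ = 1) :
    x 0 ^ 2 + x 1 ^ 2 + x 2 ^ 2 = 1 := by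
  have h := aux_inner x x
  rw [real_inner_self_eq_norm_sq, hx] at h
  linarith

lemma aux_polar (x : EuclideanSpace ℝ (Fin 3)) (hx : ‖x‖ = 1) :
    x 0 = Real.sin (Real.arccos (x 2)) * Real.cos (Complex.arg ⟨x 0, x 1⟩) ∧
    x 1 = Real.sin (Real.arccos (x 2)) * Real.sin (Complex.arg ⟨x 0, x 1⟩) ∧
    x 2 = Real.cos (Real.arccos (x 2)) := by
  have hn := aux_norm x hx
  have h2 : ‖(⟨x 0, x 1⟩ : ℂ)‖ = Real.sin (Real.arccos (x 2)) := by
    rw [Real.sin_arccos, Complex.norm_def, Complex.normSq_mk]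
    congr 1; linarith
  rw [← h2]
  refine ⟨by simp [Complex.norm_mul_cos_arg], by simp [Complex.norm_mul_sin_arg], ?_⟩
  rw [Real.cos_arccos] <;> nlinarith [sq_nonneg (x 0), sq_nonneg (x 1)]

theorem stmt7 (θ φ : ℝ) (hφ : 0 < φ) (hφ2 : φ ≤ Real.pi / 2) (h1 : φ < θ)
    (h2 : θ ≤ 2 * φ) :
    capMax 3 θ φ = ⌊2 * Real.pi / omega1 θ φ⌋₊ := by
  have hpi := Real.pi_pos
  have hs : 0 < Real.sin φ := Real.sin_pos_of_pos_of_lt_pi hφ (by linarith)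
  have hss : 0 < Real.sin φ * Real.sin φ := mul_pos hs hs
  have hcs := Real.sin_sq_add_cos_sq φ
  have hct : Real.cos θ < Real.cos φ := Real.cos_lt_cos_of_nonneg_of_le_pi hφ.le (by linarith) h1
  have hcf : 0 ≤ Real.cos φ := Real.cos_nonneg_of_neg_pi_div_two_le_of_le (by linarith) hφ2
  have hcf1 : Real.cos φ ≤ 1 := Real.cos_le_one φ
  have hc2 : Real.cos (2 * φ) ≤ Real.cos θ :=
    Real.cos_le_cos_of_nonneg_of_le_pi (by linarith) (by linarith) h2
  rw [Real.cos_two_mul] at hc2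
  have hct1 : Real.cos θ < 1 := by linarith
  set w := omega1 θ φ with hw
  have hcw : Real.cos w =
      (Real.cos θ - Real.cos φ * Real.cos φ) / (Real.sin φ * Real.sin φ) := by
    rw [hw, omega1, omega2, Real.cos_arccos]
    · rw [le_div_iff₀ hss]; nlinarith
    · rw [div_le_iff₀ hss]; nlinarith
  have hcw' : Real.cos φ * Real.cos φ + Real.sin φ * Real.sin φ * Real.cos w = Real.cos θ := by
    rw [hcw]; field_simp; ring
  have hwpi : w ≤ Real.pi := Real.arccos_le_pi _
  have hw0 : 0 < w := by
    have hwn : 0 ≤ w := Real.arccos_nonneg _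
    rcases hwn.lt_or_eq with h | h
    · exact h
    · rw [← h, Real.cos_zero] at hcw'; nlinarith
  apply IsGreatest.csSup_eq
  constructor
  · -- construction
    set N := ⌊2 * Real.pi / w⌋₊ with hN
    have hNw : N * w ≤ 2 * Real.pi := by
      have := Nat.floor_le (a := 2 * Real.pi / w) (by positivity)
      rwa [le_div_iff₀ hw0] at this
    let p : ℕ → EuclideanSpace ℝ (Fin 3) := fun k =>
      !₂[Real.sin φ * Real.cos (k * w), Real.sin φ * Real.sin (k * w), Real.cos φ]
    have hpin : ∀ i j, inner ℝ (p i) (p j) =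
        Real.cos φ * Real.cos φ + Real.sin φ * Real.sin φ * Real.cos (j * w - i * w) := by
      intro i j
      rw [aux_inner, Real.cos_sub]
      simp [p]; ring
    have hlt : ∀ i j : ℕ, i < j → j < N → inner ℝ (p i) (p j) ≤ Real.cos θ := by
      intro i j hij hj
      rw [hpin, ← hcw']
      have hi1 : (i : ℝ) + 1 ≤ j := by exact_mod_cast hij
      have hj1 : (j : ℝ) + 1 ≤ N := by exact_mod_cast hj
      have hi0 : (0 : ℝ) ≤ i := Nat.cast_nonneg i
      have := aux_cos_le w (j * w - i * w) hw0.le (by nlinarith) (by nlinarith)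
      nlinarith [mul_le_mul_of_nonneg_left this hss.le]
    have hne : ∀ i j : ℕ, i ≠ j → i < N → j < N → inner ℝ (p i) (p j) ≤ Real.cos θ := by
      intro i j hij hi hj
      rcases lt_or_gt_of_ne hij with h | h
      · exact hlt i j h hj
      · rw [real_inner_comm]; exact hlt j i h hi
    have hself : ∀ i, inner ℝ (p i) (p i) = (1 : ℝ) := by
      intro i; rw [hpin, sub_self, Real.cos_zero]; nlinarith
    refine ⟨(Finset.range N).image p, ⟨?_, ?_⟩, ?_, ?_⟩
    · intro x hx
      obtain ⟨i, -, rfl⟩ := Finset.mem_image.mp hx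
      have := hself i
      rw [real_inner_self_eq_norm_sq] at this
      nlinarith [norm_nonneg (p i)]
    · intro x hx y hy hxy
      obtain ⟨i, hi, rfl⟩ := Finset.mem_image.mp hx
      obtain ⟨j, hj, rfl⟩ := Finset.mem_image.mp hy
      have h := hne i j (fun h => hxy (by rw [h])) (Finset.mem_range.mp hi) (Finset.mem_range.mp hj)
      have h3 := Real.arccos_le_arccos h
      rwa [Real.arccos_cos (by linarith) (by linarith)] at h3
    · intro x hx
      obtain ⟨i, -, rfl⟩ := Finset.mem_image.mp hx
      rw [aux_adist_north]
      have : p i 2 = Real.cos φ := by simp [p]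
      rw [this, Real.arccos_cos hφ.le (by linarith)]
    · rw [Finset.card_image_of_injOn, Finset.card_range]
      intro i hi j hj hij
      by_contra hcon
      have h := hne i j hcon (by simpa using hi) (by simpa using hj)
      have hij' : p i = p j := hij
      rw [hij', hself] at h
      linarith
  · rintro M ⟨C, ⟨hC1, hC2⟩, hC3, rfl⟩
    apply Nat.le_floor
    rw [le_div_iff₀ hw0]
    let a : EuclideanSpace ℝ (Fin 3) → ℝ := fun x => Complex.arg ⟨x 0, x 1⟩
    have hcos : ∀ x ∈ C, ∀ y ∈ C, x ≠ y → Real.cos (a x - a y) ≤ Real.cos w := by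
      intro x hx y hy hxy
      have hd := hC2 x hx y hy hxy
      have hi : inner ℝ x y ≤ Real.cos θ := by
        have hb := abs_real_inner_le_norm x y
        rw [hC1 x hx, hC1 y hy, mul_one, abs_le] at hb
        unfold aDist at hd
        have := Real.cos_le_cos_of_nonneg_of_le_pi (by linarith) (Real.arccos_le_pi _) hd
        rwa [Real.cos_arccos hb.1 hb.2] at this
      have hxa := hC3 x hx
      have hya := hC3 y hy
      rw [aux_adist_north] at hxa hya
      obtain ⟨x0, x1, x2⟩ := aux_polar x (hC1 x hx)
      obtain ⟨y0, y1, y2⟩ := aux_polar y (hC1 y hy)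
      have hk := aux_key θ φ (Real.arccos (x 2)) (Real.arccos (y 2)) (Real.cos (a x - a y)) hφ hφ2 hct
        (Real.arccos_nonneg _) hxa (Real.arccos_nonneg _) hya (by
          refine le_trans (le_of_eq ?_) hi
          rw [aux_inner, Real.cos_sub, ← x2, ← y2]
          have e1 : x 0 * y 0 = _ := congrArg₂ (· * ·) x0 y0
          have e2 : x 1 * y 1 = _ := congrArg₂ (· * ·) x1 y1
          rw [e1, e2]
          simp only [a]
          ring)
      rw [← hcw'] at hk
      have : Real.sin φ * Real.sin φ * Real.cos (a x - a y) ≤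
        Real.sin φ * Real.sin φ * Real.cos w := by linarith
      exact le_of_mul_le_mul_left this hss
    have hw1 : Real.cos w < 1 := by
      have := Real.cos_lt_cos_of_nonneg_of_le_pi le_rfl hwpi hw0
      rwa [Real.cos_zero] at this
    have hinj : Set.InjOn a C := by
      intro x hx y hy hxy
      by_contra hcon
      have := hcos x hx y hy hcon
      rw [hxy, sub_self, Real.cos_zero] at this
      linarith
    rw [← Finset.card_image_of_injOn hinj]
    apply aux_pack w hw0 hwpi
    · intro t ht
      obtain ⟨x, -, rfl⟩ := Finset.mem_image.mp ht
      exact ⟨Complex.neg_pi_lt_arg _, Complex.arg_le_pi _⟩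
    · intro s hs t ht hst
      obtain ⟨x, hx, rfl⟩ := Finset.mem_image.mp hs
      obtain ⟨y, hy, rfl⟩ := Finset.mem_image.mp ht
      exact hcos x hx y hy (fun h => hst (by rw [h]))
end

section
/- Let n ≥ 2 and let 0 < θ and θ/2 < φ ≤ π/2. Then A(n,θ,φ) ≤ B(n, ω(θ,φ)), where B(n,·) := A(n,·,π/2) is the maximum size of a code in the closed hemisphere Cap(n,π/2). -/
theorem bdd_codes (n : ℕ) (w ψ : ℝ) (hw : 0 < w) :
    BddAbove {M | ∃ C : Finset (EuclideanSpace ℝ (Fin n)), IsCode w C ∧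
      (∀ x ∈ C, aDist x (north n) ≤ ψ) ∧ C.card = M} := by
  classical
  obtain ⟨t, ht1, htw⟩ : ∃ t : ℝ, t < 1 ∧ ∀ r : ℝ, w ≤ Real.arccos r → r ≤ t := by
    by_cases hp : w ≤ Real.pi
    · refine ⟨Real.cos w, ?_, ?_⟩
      · have := Real.cos_lt_cos_of_nonneg_of_le_pi le_rfl hp hw
        simpa using this
      · intro r hr
        by_contra hlt
        push Not at hlt
        have h3 : Real.arccos r ≤ w := by
          have := Real.arccos_le_arccos hlt.le
          rwa [Real.arccos_cos hw.le hp] at this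
        have h4 : Real.arccos r = w := le_antisymm h3 hr
        by_cases hr1 : r ≤ 1
        · have : Real.cos (Real.arccos r) = r :=
            Real.cos_arccos (by linarith [Real.neg_one_le_cos w]) hr1
          rw [h4] at this
          linarith
        · rw [Real.arccos_of_one_le (by linarith)] at hr
          linarith
    · exact ⟨0, by norm_num, fun r hr => absurd (hr.trans (Real.arccos_le_pi r)) hp⟩
  set ε : ℝ := Real.sqrt (2 - 2 * t) / 2 with hε
  have hsq : 0 < Real.sqrt (2 - 2 * t) := Real.sqrt_pos.2 (by linarith)
  have hε0 : 0 < ε := by positivity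
  have htb : TotallyBounded (Metric.sphere (0 : EuclideanSpace ℝ (Fin n)) 1) :=
    (isCompact_sphere _ _).totallyBounded
  obtain ⟨T, hT, hcov⟩ := Metric.totallyBounded_iff.1 htb ε hε0
  refine ⟨hT.toFinset.card, ?_⟩
  rintro M ⟨C, hC, -, rfl⟩
  have hex : ∀ x ∈ C, ∃ y ∈ T, dist x y < ε := by
    intro x hx
    have := hcov (show x ∈ Metric.sphere (0 : EuclideanSpace ℝ (Fin n)) 1 by simp [hC.1 x hx])
    simpa using this
  choose! g hg1 hg2 using hex
  refine Finset.card_le_card_of_injOn g (fun x hx => by simpa using hg1 x hx) ?_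
  intro x hx y hy hxy
  by_contra hne
  have hi := htw _ (hC.2 x hx y hy hne)
  have hd : dist x y < 2 * ε := by
    have := dist_triangle_right x y (g x)
    have h5 := hg2 x hx
    have h6 := hg2 y hy
    rw [← hxy] at h6
    linarith
  have h7 : ‖x - y‖ ^ 2 = 2 - 2 * inner ℝ x y := by
    rw [norm_sub_sq_real, hC.1 x hx, hC.1 y hy]; ring
  have h8 : Real.sqrt (2 - 2 * t) ≤ ‖x - y‖ :=
    Real.sqrt_le_iff.2 ⟨norm_nonneg _, by rw [h7]; linarith⟩
  rw [dist_eq_norm] at hd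
  linarith

theorem stmt9 (n : ℕ) (hn : 2 ≤ n) (θ φ : ℝ) (hθ : 0 < θ) (h1 : θ / 2 < φ)
    (h2 : φ ≤ Real.pi / 2) :
    capMax n θ φ ≤ capMax n (omega1 θ φ) (Real.pi / 2) := by
  classical
  have hpi := Real.pi_pos
  have hs : 0 < Real.sin φ := Real.sin_pos_of_pos_of_lt_pi (by linarith) (by linarith)
  have hc : 0 ≤ Real.cos φ := Real.cos_nonneg_of_mem_Icc ⟨by linarith, h2⟩
  have hsc := Real.sin_sq_add_cos_sq φ
  have hct : Real.cos θ < 1 := by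
    have := Real.cos_lt_cos_of_nonneg_of_le_pi le_rfl (by linarith : θ ≤ Real.pi) hθ
    simpa using this
  set s := Real.sin φ
  set c := Real.cos φ with hcdef
  have hq : (Real.cos θ - c * c) / (s * s) < 1 := by
    rw [div_lt_one (by positivity)]; nlinarith
  have hw : 0 < omega1 θ φ := Real.arccos_pos.2 hq
  set e := north n with he
  have hee : inner ℝ e e = (1 : ℝ) := by
    rw [real_inner_self_eq_norm_sq, he, north_norm n hn]; norm_num
  refine csSup_le_csSup (bdd_codes n _ _ hw) ⟨0, ∅, ?_, ?_, ?_⟩ ?_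
  · simp [IsCode]
  · simp
  · simp
  rintro M ⟨C, hC, hcap, rfl⟩
  let a : EuclideanSpace ℝ (Fin n) → ℝ := fun x => inner ℝ x e
  let k : EuclideanSpace ℝ (Fin n) → ℝ := fun x => Real.sqrt (a x ^ 2 - c ^ 2)
  let f : EuclideanSpace ℝ (Fin n) → EuclideanSpace ℝ (Fin n) :=
    fun x => s⁻¹ • (x + (k x - a x) • e)
  have hinner : ∀ x y, inner ℝ (f x) (f y) = (inner ℝ x y - a x * a y + k x * k y) / (s * s) := by
    intro x y
    have h3 : inner ℝ e y = a y := real_inner_comm _ _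
    have h4 : inner ℝ x e = a x := rfl
    simp only [f, inner_smul_left, inner_smul_right, inner_add_left, inner_add_right, hee, h3, h4,
      conj_trivial]
    field_simp
    ring
  have ha : ∀ x ∈ C, c ≤ a x := by
    intro x hx
    have h3 : |a x| ≤ 1 := by
      have := abs_real_inner_le_norm x e
      rwa [hC.1 x hx, he, north_norm n hn, one_mul] at this
    have h4 := abs_le.1 h3
    have h5 : Real.arccos (a x) ≤ φ := hcap x hx
    have h6 := Real.cos_le_cos_of_nonneg_of_le_pi (Real.arccos_nonneg _)
      (by linarith : φ ≤ Real.pi) h5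
    rwa [Real.cos_arccos h4.1 h4.2] at h6
  have hk : ∀ x ∈ C, k x ^ 2 = a x ^ 2 - c ^ 2 := by
    intro x hx
    exact Real.sq_sqrt (by nlinarith [ha x hx])
  have hk0 : ∀ x, 0 ≤ k x := fun x => Real.sqrt_nonneg _
  have hnorm : ∀ x ∈ C, ‖f x‖ = 1 := by
    intro x hx
    have h3 : ‖f x‖ ^ 2 = 1 := by
      rw [← real_inner_self_eq_norm_sq, hinner, real_inner_self_eq_norm_sq, hC.1 x hx,
        div_eq_one_iff_eq (by positivity)]
      nlinarith [hk x hx]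
    nlinarith [norm_nonneg (f x)]
  have hle : ∀ x ∈ C, ∀ y ∈ C, x ≠ y →
      inner ℝ (f x) (f y) ≤ (Real.cos θ - c * c) / (s * s) := by
    intro x hx y hy hne
    rw [hinner]
    refine div_le_div_of_nonneg_right ?_ (by positivity)
    have h3 : |inner ℝ x y| ≤ 1 := by
      have := abs_real_inner_le_norm x y
      rwa [hC.1 x hx, hC.1 y hy, one_mul] at this
    have h4 := abs_le.1 h3
    have h5 : θ ≤ Real.arccos (inner ℝ x y) := hC.2 x hx y hy hne
    have h6 := Real.cos_le_cos_of_nonneg_of_le_pi hθ.le (Real.arccos_le_pi _) h5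
    rw [Real.cos_arccos h4.1 h4.2] at h6
    have h7 : k x * k y + c * c ≤ a x * a y := by
      have hax := ha x hx
      have hay := ha y hy
      refine abs_le_of_sq_le_sq' ?_ (mul_nonneg (by linarith) (by linarith)) |>.2
      have e1 : (a x * a y) ^ 2 = (k x ^ 2 + c ^ 2) * (k y ^ 2 + c ^ 2) := by
        rw [hk x hx, hk y hy]; ring
      rw [e1]
      nlinarith [sq_nonneg (k x * c - k y * c)]
    linarith
  have hinj : Set.InjOn f C := by
    intro x hx y hy hxy
    by_contra hne
    have h3 := hle x hx y hy hne
    rw [← hxy, real_inner_self_eq_norm_sq, hnorm x hx] at h3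
    linarith
  refine ⟨C.image f, ⟨?_, ?_⟩, ?_, Finset.card_image_of_injOn hinj⟩
  · intro z hz
    obtain ⟨x, hx, rfl⟩ := Finset.mem_image.1 hz
    exact hnorm x hx
  · intro z hz z' hz' hne
    obtain ⟨x, hx, rfl⟩ := Finset.mem_image.1 hz
    obtain ⟨y, hy, rfl⟩ := Finset.mem_image.1 hz'
    exact Real.arccos_le_arccos (hle x hx y hy (fun h => hne (by rw [h])))
  · intro z hz
    obtain ⟨x, hx, rfl⟩ := Finset.mem_image.1 hz
    refine Real.arccos_le_pi_div_two.2 ?_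
    have h3 : inner ℝ (f x) e = s⁻¹ * k x := by
      have h4 : inner ℝ x e = a x := rfl
      simp only [f, inner_smul_left, inner_add_left, hee, h4, conj_trivial]
      ring
    change 0 ≤ inner ℝ (f x) e
    rw [h3]
    exact mul_nonneg (by positivity) (hk0 x)
end

section
/- Let s ≥ 1, let 0 < v ≤ u ≤ π/(2s), and let θ satisfy u − v ≤ θ ≤ π. Writing ρ(t) := sin(s·t)/sin t, one has cos(su)·cos(sv) + ρ(u)·ρ(v)·(cos θ − cos u · cos v) ≤ cos²(su) + ρ(u)²·(cos θ − cos²u). -/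
theorem aux_ineq (s x : ℝ) (hs : 1 ≤ s) (hx : 0 < x) (hu : s * x ≤ Real.pi / 2) :
    s * Real.cos (s * x) * Real.sin x ≤ Real.sin (s * x) * Real.cos x := by
  have hc := strictConcaveOn_sin_Icc.concaveOn
  have h1 : x ≤ s * x := by nlinarith
  have hsp : (0:ℝ) < s + 1 := by linarith
  have hmem : (s + 1) * x ∈ Set.Icc 0 Real.pi := ⟨by positivity, by nlinarith⟩
  have h0 : (0:ℝ) ∈ Set.Icc 0 Real.pi := ⟨le_refl _, Real.pi_pos.le⟩
  have h := hc.2 hmem h0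
    (show 0 ≤ (s - 1) / (s + 1) from div_nonneg (by linarith) hsp.le)
    (show 0 ≤ 2 / (s + 1) by positivity) (by field_simp; ring)
  simp only [smul_eq_mul, mul_zero, add_zero, Real.sin_zero] at h
  have e : (s - 1) / (s + 1) * ((s + 1) * x) = s * x - x := by field_simp
  have e2 : (s + 1) * x = s * x + x := by ring
  rw [e, e2, Real.sin_sub, Real.sin_add, div_mul_eq_mul_div, div_le_iff₀ hsp] at h
  nlinarith

theorem aux_mono (s a b : ℝ) (hs : 1 ≤ s) (ha : 0 < a) (hab : a ≤ b)
    (hb : b ≤ Real.pi / (2 * s)) :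
    Real.sin (s * b) / Real.sin b ≤ Real.sin (s * a) / Real.sin a := by
  have hs0 : 0 < s := by linarith
  have key : ∀ x, x ≤ Real.pi / (2 * s) → s * x ≤ Real.pi / 2 := by
    intro x hx
    rw [le_div_iff₀ (by positivity)] at hx
    linarith
  have hpos : ∀ x, 0 < x → x ≤ Real.pi / (2 * s) → 0 < Real.sin x := by
    intro x h0 hx
    have := key x hx
    have := Real.pi_pos
    exact Real.sin_pos_of_pos_of_lt_pi h0 (by nlinarith)
  have hd : ∀ x, 0 < x → x ≤ Real.pi / (2 * s) →
      HasDerivAt (fun x => Real.sin (s * x) / Real.sin x)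
        ((Real.cos (s * x) * (s * 1) * Real.sin x - Real.sin (s * x) * Real.cos x)
          / Real.sin x ^ 2) x := by
    intro x h0 hx
    exact (((hasDerivAt_id x).const_mul s).sin).div (Real.hasDerivAt_sin x) (hpos x h0 hx).ne'
  have hA : AntitoneOn (fun x => Real.sin (s * x) / Real.sin x)
      (Set.Ioc 0 (Real.pi / (2 * s))) := by
    apply antitoneOn_of_deriv_nonpos (convex_Ioc _ _)
    · intro x hx
      exact (hd x hx.1 hx.2).continuousAt.continuousWithinAt
    · intro x hx
      have hx := interior_subset hx
      exact (hd x hx.1 hx.2).differentiableAt.differentiableWithinAt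
    · intro x hx
      have hx := interior_subset hx
      rw [(hd x hx.1 hx.2).deriv]
      apply div_nonpos_of_nonpos_of_nonneg _ (sq_nonneg _)
      have := aux_ineq s x hs hx.1 (key x hx.2)
      linarith
  exact hA ⟨ha, hab.trans hb⟩ ⟨ha.trans_le hab, hb⟩ hab

theorem stmt12 (s u v θ : ℝ) (hs : 1 ≤ s) (hv : 0 < v) (hvu : v ≤ u)
    (hu : u ≤ Real.pi / (2 * s)) (hθ1 : u - v ≤ θ) (hθ2 : θ ≤ Real.pi) :
    Real.cos (s * u) * Real.cos (s * v) +
        (Real.sin (s * u) / Real.sin u) * (Real.sin (s * v) / Real.sin v) *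
          (Real.cos θ - Real.cos u * Real.cos v) ≤
      Real.cos (s * u) ^ 2 +
        (Real.sin (s * u) / Real.sin u) ^ 2 * (Real.cos θ - Real.cos u ^ 2) := by
  have hs0 : 0 < s := by linarith
  have hpi := Real.pi_pos
  have hu0 : 0 < u := hv.trans_le hvu
  have hsu : s * u ≤ Real.pi / 2 := by
    rw [le_div_iff₀ (by positivity)] at hu
    linarith
  have hu2 : u ≤ Real.pi / 2 := by nlinarith
  have hsinu : 0 < Real.sin u := Real.sin_pos_of_pos_of_lt_pi hu0 (by linarith)
  have hsinv : 0 < Real.sin v := Real.sin_pos_of_pos_of_lt_pi hv (by linarith)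
  have hsinsu : 0 < Real.sin (s * u) :=
    Real.sin_pos_of_pos_of_lt_pi (by positivity) (by linarith)
  have hm := aux_mono s v u hs hv hvu hu
  have hcos : Real.cos θ ≤ Real.cos (u - v) :=
    Real.cos_le_cos_of_nonneg_of_le_pi (by linarith) hθ2 hθ1
  have hr : (Real.sin (s * u) / Real.sin u) ^ 2 * (1 - Real.cos (u - v)) ≤
      1 - Real.cos (s * u - s * v) := by
    rcases hvu.eq_or_lt with h | h
    · subst h; simp
    have hw : 0 < (u - v) / 2 := by linarith
    have hsw : 0 < Real.sin ((u - v) / 2) :=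
      Real.sin_pos_of_pos_of_lt_pi hw (by linarith)
    have h1 := aux_mono s ((u - v) / 2) u hs hw (by linarith) hu
    rw [le_div_iff₀ hsw] at h1
    have h2 : 0 ≤ Real.sin (s * u) / Real.sin u * Real.sin ((u - v) / 2) := by positivity
    have h3 := pow_le_pow_left₀ h2 h1 2
    have e1 : Real.cos (u - v) = 1 - 2 * Real.sin ((u - v) / 2) ^ 2 := by
      rw [← Real.cos_sq_add_sin_sq ((u - v) / 2)]
      conv_lhs => rw [show u - v = 2 * ((u - v) / 2) by ring, Real.cos_two_mul']
      ring
    have e2 : Real.cos (s * u - s * v) = 1 - 2 * Real.sin (s * ((u - v) / 2)) ^ 2 := by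
      rw [← Real.cos_sq_add_sin_sq (s * ((u - v) / 2))]
      conv_lhs => rw [show s * u - s * v = 2 * (s * ((u - v) / 2)) by ring, Real.cos_two_mul']
      ring
    rw [e1, e2]
    rw [mul_pow] at h3
    linarith
  have hp : 0 < Real.sin (s * u) / Real.sin u := by positivity
  have hU : Real.sin (s * u) = Real.sin (s * u) / Real.sin u * Real.sin u := by field_simp
  have hV : Real.sin (s * v) = Real.sin (s * v) / Real.sin v * Real.sin v := by field_simp
  rw [Real.cos_sub (s * u)] at hr
  have hq := Real.sin_sq_add_cos_sq (s * u)
  have hq' := Real.sin_sq_add_cos_sq u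
  rw [Real.cos_sub] at hr hcos
  generalize Real.sin (s * u) / Real.sin u = p at *
  generalize Real.sin (s * v) / Real.sin v = q at *
  rw [hU, hV] at hr
  rw [hU] at hq
  have h5 := mul_nonneg (mul_nonneg hp.le (sub_nonneg.2 hm)) (sub_nonneg.2 hcos)
  have h6 : Real.cos u ^ 2 = 1 - Real.sin u ^ 2 := by linarith
  rw [h6]
  nlinarith
end

section
/- Let n ≥ 3. The one-sided kissing number B(n) := B(n,π/3) satisfies 2·B(n) ≤ A(n−1, arccos(1/√3)) + k(n) and B(n) ≤ k(n) − 2, where k(n) := A(n,π/3) and A(n−1,·) refers to codes on the unit sphere S^{n−2} ⊂ ℝ^{n−1}. -/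
theorem aux_isCode_iff {n : ℕ} {c : ℝ} (h1 : -1 ≤ c) (h2 : c ≤ 1)
    (C : Finset (EuclideanSpace ℝ (Fin n))) :
    IsCode (Real.arccos c) C ↔
      (∀ x ∈ C, ‖x‖ = 1) ∧ ∀ x ∈ C, ∀ y ∈ C, x ≠ y → (inner ℝ x y : ℝ) ≤ c := by
  unfold IsCode aDist
  refine and_congr_right fun hC => ?_
  refine forall₂_congr fun x hx => forall₂_congr fun y hy => forall_congr' fun _ => ?_
  have hb := abs_real_inner_le_norm x y
  rw [hC x hx, hC y hy, one_mul, abs_le] at hb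
  exact Real.strictAntiOn_arccos.le_iff_ge ⟨h1, h2⟩ ⟨hb.1, hb.2⟩

theorem aux_bdd (n : ℕ) {c : ℝ} (h1 : -1 ≤ c) (h2 : c < 1) :
    BddAbove {M | ∃ C : Finset (EuclideanSpace ℝ (Fin n)), IsCode (Real.arccos c) C ∧ C.card = M} := by
  have hcomp : IsCompact (Metric.sphere (0 : EuclideanSpace ℝ (Fin n)) 1) := isCompact_sphere 0 1
  have hs : 0 < Real.sqrt (2 - 2 * c) := Real.sqrt_pos.2 (by linarith)
  obtain ⟨t, ht, hcov⟩ := Metric.totallyBounded_iff.1 hcomp.totallyBounded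
    (Real.sqrt (2 - 2 * c) / 2) (by linarith)
  refine ⟨ht.toFinset.card, ?_⟩
  rintro M ⟨C, hC, rfl⟩
  rw [aux_isCode_iff h1 h2.le] at hC
  have hch : ∀ x ∈ C, ∃ y ∈ t, dist x y < Real.sqrt (2 - 2 * c) / 2 := by
    intro x hx
    have := hcov (show x ∈ Metric.sphere (0 : EuclideanSpace ℝ (Fin n)) 1 by simpa using hC.1 x hx)
    simpa using this
  choose! f hf1 hf2 using hch
  refine Finset.card_le_card_of_injOn f (fun x hx => by simpa using hf1 x hx) ?_
  intro x hx y hy hxy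
  by_contra hne
  have hd : dist x y < Real.sqrt (2 - 2 * c) := by
    have a := hf2 x hx
    have b := hf2 y hy
    rw [← hxy] at b
    have := dist_triangle_right x y (f x)
    linarith
  have hi := hC.2 x hx y hy hne
  have hn : ‖x - y‖ ^ 2 = 2 - 2 * inner ℝ x y := by
    rw [norm_sub_sq_real, hC.1 x hx, hC.1 y hy]; ring
  rw [dist_eq_norm] at hd
  have h3 : Real.sqrt (2 - 2 * c) ≤ ‖x - y‖ := by
    apply Real.sqrt_le_iff.2
    exact ⟨norm_nonneg _, by linarith⟩
  linarith

theorem aux_pi : Real.pi / 3 = Real.arccos (1 / 2) := by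
  rw [← Real.cos_pi_div_three, Real.arccos_cos] <;> linarith [Real.pi_pos]

theorem aux_le (n : ℕ) {c : ℝ} (h1 : -1 ≤ c) (h2 : c < 1) (C : Finset (EuclideanSpace ℝ (Fin n)))
    (hC : IsCode (Real.arccos c) C) : C.card ≤ sphereMax n (Real.arccos c) :=
  le_csSup (aux_bdd n h1 h2) ⟨C, hC, rfl⟩

/-- Projection forgetting the last coordinate. -/
def auxProj {m : ℕ} (x : EuclideanSpace ℝ (Fin (m + 1))) : EuclideanSpace ℝ (Fin m) :=
  WithLp.toLp 2 (fun i => x i.castSucc)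

theorem aux_north {m : ℕ} (x : EuclideanSpace ℝ (Fin (m + 1))) :
    (inner ℝ x (north (m + 1)) : ℝ) = x (Fin.last m) := by
  have : north (m + 1) = EuclideanSpace.single (Fin.last m) 1 := by
    simp [north]; rfl
  rw [this]
  simp [EuclideanSpace.inner_single_right]

theorem aux_north_norm (m : ℕ) : ‖north (m + 1)‖ = 1 := by
  simp [north]

theorem aux_proj {m : ℕ} (x y : EuclideanSpace ℝ (Fin (m + 1))) :
    (inner ℝ (auxProj x) (auxProj y) : ℝ) =
      inner ℝ x y - inner ℝ x (north (m + 1)) * inner ℝ y (north (m + 1)) := by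
  rw [aux_north, aux_north]
  simp only [PiLp.inner_apply, auxProj, Fin.sum_univ_castSucc]
  simp [mul_comm]

theorem pos_of_sq_pos_aux {a : ℝ} (h : 0 ≤ a) (h2 : 0 < a ^ 2) : 0 < a := by
  rcases h.lt_or_eq with h | h
  · exact h
  · rw [← h] at h2; norm_num at h2

theorem aux_num {a b : ℝ} (ha : 0 ≤ a) (hab : a ≤ b) (hb : b ≤ 1 / 2) :
    3 * (1 / 2 - a * b) ^ 2 ≤ (1 - a ^ 2) * (1 - b ^ 2) := by
  have h0 : 0 ≤ b := ha.trans hab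
  have h2 : b ^ 2 ≤ 1 / 4 := by nlinarith
  have h3 : 0 ≤ 3 * b - a - 2 * a * b ^ 2 := by nlinarith
  nlinarith [mul_nonneg ha h3]

theorem stmt17 (n : ℕ) (hn : 3 ≤ n) :
    2 * capMax n (Real.pi / 3) (Real.pi / 2) ≤
        sphereMax (n - 1) (Real.arccos (1 / Real.sqrt 3)) + sphereMax n (Real.pi / 3) ∧
      capMax n (Real.pi / 3) (Real.pi / 2) ≤ sphereMax n (Real.pi / 3) - 2 := by
  classical
  obtain ⟨m, rfl⟩ : ∃ m, n = m + 1 := ⟨n - 1, by omega⟩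
  rw [aux_pi, Nat.add_sub_cancel]
  have hs3 : 1 < Real.sqrt 3 := by
    rw [Real.lt_sqrt] <;> norm_num
  have hs3' : Real.sqrt 3 ^ 2 = 3 := Real.sq_sqrt (by norm_num)
  have hc1 : 1 / Real.sqrt 3 < 1 := by
    rw [div_lt_one] <;> linarith
  have hc0 : 0 < 1 / Real.sqrt 3 := by positivity
  -- an optimal one-sided code
  have hmem : capMax (m + 1) (Real.arccos (1 / 2)) (Real.pi / 2) ∈
      {M | ∃ C : Finset (EuclideanSpace ℝ (Fin (m + 1))), IsCode (Real.arccos (1 / 2)) C ∧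
        (∀ x ∈ C, aDist x (north (m + 1)) ≤ Real.pi / 2) ∧ C.card = M} := by
    apply Nat.sSup_mem
    · exact ⟨0, ∅, by simp [IsCode], by simp, by simp⟩
    · refine (aux_bdd (m + 1) (c := 1 / 2) (by norm_num) (by norm_num)).mono ?_
      rintro M ⟨C, h, -, h'⟩
      exact ⟨C, h, h'⟩
  obtain ⟨C, hC, hcap, hcard⟩ := hmem
  rw [← hcard]
  rw [aux_isCode_iff (by norm_num) (by norm_num)] at hC
  obtain ⟨hnorm, hin⟩ := hC
  set e := north (m + 1) with he
  have hen : ‖e‖ = 1 := aux_north_norm m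
  have hee : (inner ℝ e e : ℝ) = 1 := by rw [real_inner_self_eq_norm_sq, hen]; norm_num
  have hpos : ∀ x ∈ C, 0 ≤ (inner ℝ x e : ℝ) := by
    intro x hx
    exact Real.arccos_le_pi_div_two.1 (hcap x hx)
  have hself : ∀ x ∈ C, (inner ℝ x x : ℝ) = 1 := by
    intro x hx; rw [real_inner_self_eq_norm_sq, hnorm x hx]; norm_num
  have hone : ∀ x : EuclideanSpace ℝ (Fin (m + 1)), (inner ℝ x x : ℝ) = 1 → ‖x‖ = 1 := by
    intro x hx
    rw [real_inner_self_eq_norm_sq] at hx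
    nlinarith [norm_nonneg x]
  constructor
  · -- reflect the high points
    let s : EuclideanSpace ℝ (Fin (m + 1)) → EuclideanSpace ℝ (Fin (m + 1)) :=
      fun x => x - (2 * inner ℝ x e) • e
    have hse : ∀ x, (inner ℝ (s x) e : ℝ) = - inner ℝ x e := by
      intro x
      simp only [s, inner_sub_left, real_inner_smul_left, hee]; ring
    have hs1 : ∀ x y, (inner ℝ x (s y) : ℝ) = inner ℝ x y - 2 * inner ℝ x e * inner ℝ y e := by
      intro x y
      simp only [s, inner_sub_right, real_inner_smul_right]; ring
    have hss : ∀ x y, (inner ℝ (s x) (s y) : ℝ) = inner ℝ x y := by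
      intro x y
      rw [hs1, hse, real_inner_comm, hs1, real_inner_comm]; ring
    have hsinj : Function.Injective s := by
      intro x y hxy
      have h : (inner ℝ x e : ℝ) = inner ℝ y e := by
        have := congrArg (fun z => (inner ℝ z e : ℝ)) hxy
        simp only [hse] at this
        linarith
      simp only [s, h] at hxy
      exact sub_left_injective hxy
    let E := C.filter (fun x => 1 / 2 ≤ (inner ℝ x e : ℝ))
    let D := C.filter (fun x => ¬ 1 / 2 ≤ (inner ℝ x e : ℝ))
    have hED : E.card + D.card = C.card := Finset.card_filter_add_card_filter_not _
    have hdisj : Disjoint C (E.image s) := by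
      rw [Finset.disjoint_left]
      intro x hx hx'
      obtain ⟨y, hy, rfl⟩ := Finset.mem_image.1 hx'
      have h1 := hpos _ hx
      rw [hse] at h1
      have := (Finset.mem_filter.1 hy).2
      linarith
    have hcross : ∀ x ∈ C, ∀ y ∈ E, (inner ℝ x (s y) : ℝ) ≤ 1 / 2 := by
      intro x hx y hy
      obtain ⟨hyC, hy2⟩ := Finset.mem_filter.1 hy
      rw [hs1]
      by_cases hxy : x = y
      · subst hxy
        rw [hself x hx]; nlinarith
      · have := hin x hx y hyC hxy
        nlinarith [mul_nonneg (hpos x hx) (hpos y hyC)]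
    have hk := aux_le (m + 1) (c := 1 / 2) (by norm_num) (by norm_num) (C ∪ E.image s) (by
      rw [aux_isCode_iff (by norm_num) (by norm_num)]
      constructor
      · intro x hx
        rcases Finset.mem_union.1 hx with hx | hx
        · exact hnorm x hx
        · obtain ⟨y, hy, rfl⟩ := Finset.mem_image.1 hx
          exact hone _ (by rw [hss]; exact hself y (Finset.mem_filter.1 hy).1)
      · intro x hx y hy hxy
        rcases Finset.mem_union.1 hx with hx | hx <;> rcases Finset.mem_union.1 hy with hy | hy
        · exact hin x hx y hy hxy
        · obtain ⟨y, hyi, rfl⟩ := Finset.mem_image.1 hy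
          replace hy := hyi
          exact hcross x hx y hy
        · obtain ⟨x, hxi, rfl⟩ := Finset.mem_image.1 hx
          replace hx := hxi
          rw [real_inner_comm]
          exact hcross y hy x hx
        · obtain ⟨y, hyi, rfl⟩ := Finset.mem_image.1 hy
          replace hy := hyi
          obtain ⟨x, hxi, rfl⟩ := Finset.mem_image.1 hx
          replace hx := hxi
          rw [hss]
          exact hin x (Finset.mem_filter.1 hx).1 y (Finset.mem_filter.1 hy).1
            (fun h => hxy (by rw [h])))
    rw [Finset.card_union_of_disjoint hdisj, Finset.card_image_of_injective _ hsinj] at hk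
    -- project the low points
    let f : EuclideanSpace ℝ (Fin (m + 1)) → EuclideanSpace ℝ (Fin m) :=
      fun x => ‖auxProj x‖⁻¹ • auxProj x
    have hDn : ∀ x ∈ D, ‖auxProj x‖ ^ 2 = 1 - (inner ℝ x e : ℝ) ^ 2 ∧ 0 < ‖auxProj x‖ := by
      intro x hx
      obtain ⟨hxC, hx2⟩ := Finset.mem_filter.1 hx
      have h := aux_proj x x
      rw [hself x hxC, real_inner_self_eq_norm_sq] at h
      have h0 := hpos x hxC
      refine ⟨by rw [h]; ring, ?_⟩
      have : 0 < ‖auxProj x‖ ^ 2 := by rw [h, ← he]; nlinarith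
      exact pos_of_sq_pos_aux (norm_nonneg _) this
    have hfn : ∀ x ∈ D, ‖f x‖ = 1 := by
      intro x hx
      have := (hDn x hx).2
      simp only [f, norm_smul, norm_inv, norm_norm]
      field_simp
    have hfi : ∀ x ∈ D, ∀ y ∈ D, x ≠ y → (inner ℝ (f x) (f y) : ℝ) ≤ 1 / Real.sqrt 3 := by
      intro x hx y hy hxy
      obtain ⟨hx1, hx2⟩ := hDn x hx
      obtain ⟨hy1, hy2⟩ := hDn y hy
      obtain ⟨hxC, hx3⟩ := Finset.mem_filter.1 hx
      obtain ⟨hyC, hy3⟩ := Finset.mem_filter.1 hy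
      have hx0 := hpos x hxC
      have hy0 := hpos y hyC
      have hi := hin x hxC y hyC hxy
      simp only [f, real_inner_smul_left, real_inner_smul_right]
      rw [aux_proj, ← he]
      set a : ℝ := inner ℝ x e
      set b : ℝ := inner ℝ y e
      set p := ‖auxProj x‖
      set q := ‖auxProj y‖
      have hnum : 3 * (1 / 2 - a * b) ^ 2 ≤ (1 - a ^ 2) * (1 - b ^ 2) := by
        rcases le_total a b with h | h
        · exact aux_num hx0 h (by linarith)
        · have := aux_num hy0 h (by linarith)
          nlinarith
      have h1 : Real.sqrt 3 * (1 / 2 - a * b) ≤ p * q := by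
        apply le_of_sq_le_sq _ (by positivity)
        rw [mul_pow, mul_pow, hs3', hx1, hy1]
        exact hnum
      have h2 : Real.sqrt 3 * (inner ℝ x y - a * b) ≤ p * q := by
        refine le_trans ?_ h1
        apply mul_le_mul_of_nonneg_left _ (by linarith)
        linarith
      have : q⁻¹ * (p⁻¹ * (inner ℝ x y - a * b)) = (inner ℝ x y - a * b) / (p * q) := by
        field_simp
      rw [this, div_le_div_iff₀ (by positivity) (by linarith)]
      linarith
    have hfinj : Set.InjOn f D := by
      intro x hx y hy hxy
      by_contra hne
      have h := hfi x hx y hy hne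
      rw [← hxy, real_inner_self_eq_norm_sq, hfn x hx] at h
      linarith
    have hA := aux_le m (c := 1 / Real.sqrt 3) (by linarith) hc1 (D.image f) (by
      rw [aux_isCode_iff (by linarith) hc1.le]
      constructor
      · intro x hx
        obtain ⟨x, hxi, rfl⟩ := Finset.mem_image.1 hx
        replace hx := hxi
        exact hfn x hx
      · intro x hx y hy hxy
        obtain ⟨x, hxi, rfl⟩ := Finset.mem_image.1 hx
        replace hx := hxi
        obtain ⟨y, hyi, rfl⟩ := Finset.mem_image.1 hy
        replace hy := hyi
        exact hfi x hx y hy (fun h => hxy (by rw [h])))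
    rw [Finset.card_image_of_injOn hfinj] at hA
    omega
  · -- add two points near the south pole
    obtain ⟨u, hu, hue⟩ : ∃ u : EuclideanSpace ℝ (Fin (m + 1)),
        (inner ℝ u u : ℝ) = 1 ∧ (inner ℝ u e : ℝ) = 0 := by
      have h0 : (⟨0, by omega⟩ : Fin (m + 1)) ≠ Fin.last m := by
        intro h
        have := congrArg Fin.val h
        simp at this
        omega
      refine ⟨EuclideanSpace.single ⟨0, by omega⟩ 1, ?_, ?_⟩
      · simp
      · rw [he, aux_north]
        simp
        omega
    have heu : (inner ℝ e u : ℝ) = 0 := by rw [real_inner_comm, hue]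
    let r := Real.sqrt 3 / 2
    have hr : r ^ 2 = 3 / 4 := by simp only [r, div_pow, hs3']; norm_num
    have hr0 : 0 < r := by positivity
    let z : ℝ → EuclideanSpace ℝ (Fin (m + 1)) := fun t => t • u - r • e
    have hzz : ∀ t w, (inner ℝ (z t) (z w) : ℝ) = t * w + 3 / 4 := by
      intro t w
      simp only [z, inner_sub_left, inner_sub_right, real_inner_smul_left, real_inner_smul_right,
        hu, hue, heu, hee]
      linear_combination hr
    have hze : ∀ t, (inner ℝ (z t) e : ℝ) = - r := by
      intro t
      simp only [z, inner_sub_left, real_inner_smul_left, hue, hee]; ring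
    have hxz : ∀ x ∈ C, ∀ t, |t| = 1 / 2 → (inner ℝ x (z t) : ℝ) ≤ 1 / 2 := by
      intro x hx t ht
      simp only [z, inner_sub_right, real_inner_smul_right]
      have hun : ‖u‖ = 1 := hone u hu
      have h1 := abs_real_inner_le_norm x u
      rw [hnorm x hx, hun, one_mul] at h1
      have h2 : t * inner ℝ x u ≤ 1 / 2 := by
        refine (le_abs_self _).trans ?_
        rw [abs_mul, ht]; linarith
      have := mul_nonneg hr0.le (hpos x hx)
      linarith
    have hzC : ∀ t, z t ∉ C := by
      intro t h
      have := hpos _ h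
      rw [hze] at this
      linarith
    have hzne : z (1 / 2) ≠ z (-1 / 2) := by
      intro h
      have h1 := hzz (1 / 2) (1 / 2)
      have h2 := hzz (1 / 2) (-1 / 2)
      rw [← h, h1] at h2
      norm_num at h2
    have ht1 : |(1 / 2 : ℝ)| = 1 / 2 := by norm_num [abs_of_pos]
    have ht2 : |(-1 / 2 : ℝ)| = 1 / 2 := by norm_num [abs_of_neg]
    have hk := aux_le (m + 1) (c := 1 / 2) (by norm_num) (by norm_num)
      (insert (z (1 / 2)) (insert (z (-1 / 2)) C)) (by
      rw [aux_isCode_iff (by norm_num) (by norm_num)]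
      constructor
      · intro x hx
        simp only [Finset.mem_insert] at hx
        rcases hx with rfl | rfl | hx
        · exact hone _ (by rw [hzz]; norm_num)
        · exact hone _ (by rw [hzz]; norm_num)
        · exact hnorm x hx
      · intro x hx y hy hxy
        simp only [Finset.mem_insert] at hx hy
        rcases hx with rfl | rfl | hx <;> rcases hy with rfl | rfl | hy
        · exact absurd rfl hxy
        · rw [hzz]; norm_num
        · rw [real_inner_comm]; exact hxz y hy _ ht1
        · rw [hzz]; norm_num
        · exact absurd rfl hxy
        · rw [real_inner_comm]; exact hxz y hy _ ht2
        · exact hxz x hx _ ht1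
        · exact hxz x hx _ ht2
        · exact hin x hx y hy hxy)
    rw [Finset.card_insert_of_notMem (by
        rw [Finset.mem_insert, not_or]; exact ⟨hzne, hzC _⟩),
      Finset.card_insert_of_notMem (hzC _)] at hk
    omega
end
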